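/- arXiv:2601.04009 — 2 statements merged into one kernel-verified Lean document; each statement's English description precedes it below -/
import Mathlib

section
/- For every ε > 0 there exists δ ∈ (0,1) such that for all α, β ∈ [0,1) with max(α,β) > 1−δ, setting γ = (1−αβ)/(2−α−β), one has | (∫_{(−γ,γ)×(−γ,γ)} A(x,y) d(x,y)) / (log(1−max(α,β)))² − 3/2 | < ε. -/
open MeasureTheory Real

/-- The area of the dual unit ball of the Hilbert metric of the square `(-1,1)²`
at the point `(x,y)`. -/
noncomputable def dualBallArea (q : ℝ × ℝ) : ℝ :=
  (2 + max |q.1| |q.2|) / (2 * (1 - q.1 ^ 2) * (1 - q.2 ^ 2))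

/-!
Writing `u = 1 / (1 - x²)` and `v = 1 / (1 - y²)`, replacing `max |x| |y|` by its boundary value `1`
turns the integrand into `3/2 * u * v`, at the price of an error at most `v / 2`. Over the square
`(-γ, γ)²` the product integrates to `3/2 * (2 artanh γ)²`, while the error contributes only
`O(artanh γ)`. As `γ → 1`, `2 artanh γ` is asymptotic to `-log (1 - γ)`, and since `1 - γ` is half
the harmonic mean of `1 - α` and `1 - β`, it is comparable to their minimum `1 - max α β`, so that
the logarithms of the two are asymptotic.
-/

open Set Filter Topology Asymptotics

section Artanh

lemma artanh_neg_eq_neg_artanh (x : ℝ) : artanh (-x) = -artanh x := by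
  rw [artanh, artanh, ← log_inv, ← sqrt_inv, inv_div, sub_neg_eq_add, ← sub_eq_add_neg]

lemma hasDerivAt_artanh {x : ℝ} (hx : x ∈ Ioo (-1) 1) :
    HasDerivAt artanh (1 - x ^ 2)⁻¹ x := by
  have hadd : 1 + x ≠ 0 := by linarith [hx.1]
  have hsub : 1 - x ≠ 0 := by linarith [hx.2]
  have hderiv : HasDerivAt (fun y ↦ 1 / 2 * log ((1 + y) / (1 - y))) (1 - x ^ 2)⁻¹ x := by
    convert! ((((hasDerivAt_id x).const_add 1).fun_div ((hasDerivAt_id x).const_sub 1) hsub).log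
      (div_ne_zero hadd hsub)).const_mul (1 / 2) using 1
    rw [show 1 - x ^ 2 = (1 + x) * (1 - x) by ring]
    simp only [id]
    field_simp
    ring
  refine hderiv.congr_of_eventuallyEq ?_
  filter_upwards [isOpen_Ioo.mem_nhds hx] with y hy
  exact artanh_eq_half_log (Ioo_subset_Icc_self hy)

lemma continuousOn_inv_one_sub_sq : ContinuousOn (fun x : ℝ ↦ (1 - x ^ 2)⁻¹) (Ioo (-1) 1) :=
  ContinuousOn.inv₀ (by fun_prop) fun _ hx ↦
    (sub_pos.2 ((sq_lt_one_iff_abs_lt_one _).2 (abs_lt.2 hx))).ne'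

lemma integral_inv_one_sub_sq {a b : ℝ} (ha : a ∈ Ioo (-1) 1) (hb : b ∈ Ioo (-1) 1) :
    ∫ x in a..b, (1 - x ^ 2)⁻¹ = artanh b - artanh a := by
  have hsub : uIcc a b ⊆ Ioo (-1) 1 := ordConnected_Ioo.uIcc_subset ha hb
  exact intervalIntegral.integral_eq_sub_of_hasDerivAt
    (fun x hx ↦ hasDerivAt_artanh (hsub hx))
    (continuousOn_inv_one_sub_sq.mono hsub).intervalIntegrable

lemma setIntegral_inv_one_sub_sq_Ioo_neg {γ : ℝ} (hγ : γ ∈ Ico 0 1) :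
    ∫ x in Ioo (-γ) γ, (1 - x ^ 2)⁻¹ = 2 * artanh γ := by
  obtain ⟨h0, h1⟩ := hγ
  rw [← integral_Ioc_eq_integral_Ioo, ← intervalIntegral.integral_of_le (by linarith),
    integral_inv_one_sub_sq ⟨by linarith, by linarith⟩ ⟨by linarith, h1⟩,
    artanh_neg_eq_neg_artanh]
  ring

end Artanh

section LogAsymptotics

lemma isEquivalent_log_of_isTheta {ι : Type*} {l : Filter ι} {f g : ι → ℝ} (h : f =Θ[l] g)
    (hg : Tendsto (fun i ↦ |log (g i)|) l atTop) :
    (fun i ↦ log (f i)) ~[l] fun i ↦ log (g i) := by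
  obtain ⟨c, hc, hfg⟩ := h.1.exists_pos
  obtain ⟨d, hd, hgf⟩ := h.2.exists_pos
  have hbdd : (fun i ↦ log (f i) - log (g i)) =O[l] fun _ ↦ (1 : ℝ) := by
    refine IsBigO.of_bound (max (log c) (log d)) ?_
    filter_upwards [hfg.bound, hgf.bound, hg.eventually_gt_atTop 0] with i hf hg hlog
    have hg0 : 0 < |g i| := abs_pos.2 fun h0 ↦ by simp [h0] at hlog
    have hf0 : 0 < |f i| := pos_of_mul_pos_right (hg0.trans_le hg) hd.le
    have hupper : log (f i) ≤ log c + log (g i) := by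
      rw [← log_abs (f i), ← log_abs (g i), ← log_mul hc.ne' hg0.ne']
      exact log_le_log hf0 hf
    have hlower : log (g i) ≤ log d + log (f i) := by
      rw [← log_abs (f i), ← log_abs (g i), ← log_mul hd.ne' hf0.ne']
      exact log_le_log hg0 hg
    rw [norm_one, mul_one, norm_eq_abs, abs_le']
    exact ⟨le_max_of_le_left (by linarith), le_max_of_le_right (by linarith)⟩
  exact hbdd.trans_isLittleO (isLittleO_const_left.2 (Or.inr hg))

lemma tendsto_one_sub_nhdsLT_one : Tendsto (fun x : ℝ ↦ 1 - x) (𝓝[<] 1) (𝓝[>] 0) := by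
  refine tendsto_nhdsWithin_iff.2 ⟨tendsto_nhdsWithin_of_tendsto_nhds ?_, ?_⟩
  · exact (continuous_const.sub continuous_id).tendsto' 1 0 (sub_self 1)
  · filter_upwards [self_mem_nhdsWithin] with x hx using sub_pos.2 (mem_Iio.1 hx)

lemma tendsto_abs_log_one_sub : Tendsto (fun x : ℝ ↦ |log (1 - x)|) (𝓝[<] 1) atTop :=
  tendsto_abs_atBot_atTop.comp (tendsto_log_nhdsGT_zero.comp tendsto_one_sub_nhdsLT_one)

lemma isEquivalent_artanh :
    artanh ~[𝓝[<] 1] fun x ↦ 1 / 2 * -log (1 - x) := by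
  have hquot : (fun x : ℝ ↦ (1 + x) / (1 - x)) =Θ[𝓝[<] 1] fun x ↦ (1 - x)⁻¹ := by
    have hnum : Tendsto (fun x : ℝ ↦ 1 + x) (𝓝[<] 1) (𝓝 2) := tendsto_nhdsWithin_of_tendsto_nhds
      ((continuous_const.add continuous_id).tendsto' 1 2 one_add_one_eq_two)
    have hone : (fun x : ℝ ↦ 1 + x) =Θ[𝓝[<] 1] fun _ ↦ (1 : ℝ) :=
      ((isEquivalent_const_iff_tendsto two_ne_zero).2 hnum).isTheta.trans
        (isTheta_const_const two_ne_zero one_ne_zero)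
    simpa only [div_eq_mul_inv, one_mul] using
      hone.mul (isTheta_refl (fun x : ℝ ↦ (1 - x)⁻¹) (𝓝[<] 1))
  have hlog := isEquivalent_log_of_isTheta hquot
    (by simpa only [log_inv, abs_neg] using tendsto_abs_log_one_sub)
  simp only [log_inv] at hlog
  refine ((IsEquivalent.refl (u := fun _ ↦ (1 / 2 : ℝ))).mul hlog).congr_left ?_
  filter_upwards [Ioo_mem_nhdsLT (show (-1 : ℝ) < 1 by norm_num)] with x hx
  exact (artanh_eq_half_log (Ioo_subset_Icc_self hx)).symm

lemma tendsto_artanh_atTop : Tendsto artanh (𝓝[<] 1) atTop := by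
  refine isEquivalent_artanh.symm.tendsto_atTop ?_
  exact (tendsto_neg_atBot_atTop.comp
    (tendsto_log_nhdsGT_zero.comp tendsto_one_sub_nhdsLT_one)).const_mul_atTop one_half_pos

end LogAsymptotics

section SquareDualArea

/-- The integral of `dualBallArea` over the square `(-γ, γ)²`, studied as a function of `γ`
alone before `γ` is tied to `α` and `β`. -/
noncomputable def squareDualArea (γ : ℝ) : ℝ :=
  ∫ q in Ioo (-γ) γ ×ˢ Ioo (-γ) γ, dualBallArea q

lemma abs_dualBallArea_sub_le {q : ℝ × ℝ} (h₁ : |q.1| < 1) (h₂ : |q.2| < 1) :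
    |dualBallArea q - 3 / 2 * ((1 - q.1 ^ 2)⁻¹ * (1 - q.2 ^ 2)⁻¹)|
      ≤ 1 / 2 * (1 - q.2 ^ 2)⁻¹ := by
  have hx : 0 < 1 - q.1 ^ 2 := sub_pos.2 ((sq_lt_one_iff_abs_lt_one _).2 h₁)
  have hy : 0 < 1 - q.2 ^ 2 := sub_pos.2 ((sq_lt_one_iff_abs_lt_one _).2 h₂)
  have hmax : 0 ≤ 1 - max |q.1| |q.2| := sub_nonneg.2 (max_lt h₁ h₂).le
  have hdiff : dualBallArea q - 3 / 2 * ((1 - q.1 ^ 2)⁻¹ * (1 - q.2 ^ 2)⁻¹)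
      = -(1 / 2 * (1 - q.2 ^ 2)⁻¹ * ((1 - max |q.1| |q.2|) / (1 - q.1 ^ 2))) := by
    rw [dualBallArea]
    field_simp
    ring
  have hratio : (1 - max |q.1| |q.2|) / (1 - q.1 ^ 2) ≤ 1 := by
    rw [div_le_one hx]
    have hle : q.1 ^ 2 ≤ |q.1| := by
      rw [← sq_abs]
      exact pow_le_of_le_one (abs_nonneg _) h₁.le two_ne_zero
    linarith [le_max_left |q.1| |q.2|]
  rw [hdiff, abs_neg, abs_of_nonneg (by positivity)]
  exact mul_le_of_le_one_right (by positivity) hratio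

lemma continuousOn_dualBallArea : ContinuousOn dualBallArea (Ioo (-1) 1 ×ˢ Ioo (-1) 1) := by
  refine ContinuousOn.div (by fun_prop) (by fun_prop) fun q hq ↦ ?_
  have hx : 0 < 1 - q.1 ^ 2 := sub_pos.2 ((sq_lt_one_iff_abs_lt_one _).2 (abs_lt.2 hq.1))
  have hy : 0 < 1 - q.2 ^ 2 := sub_pos.2 ((sq_lt_one_iff_abs_lt_one _).2 (abs_lt.2 hq.2))
  positivity

lemma integrableOn_Ioo_prod_Ioo_of_continuousOn {E : Type*} [NormedAddCommGroup E]
    {f : ℝ × ℝ → E} {a b c d : ℝ} (hf : ContinuousOn f (Icc a b ×ˢ Icc c d)) :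
    IntegrableOn f (Ioo a b ×ˢ Ioo c d) :=
  (hf.integrableOn_compact (isCompact_Icc.prod isCompact_Icc)).mono_set
    (prod_mono Ioo_subset_Icc_self Ioo_subset_Icc_self)

lemma setIntegral_inv_mul_inv_one_sub_sq {γ : ℝ} (hγ : γ ∈ Ico 0 1) :
    ∫ q in Ioo (-γ) γ ×ˢ Ioo (-γ) γ, (1 - q.1 ^ 2)⁻¹ * (1 - q.2 ^ 2)⁻¹ = (2 * artanh γ) ^ 2 := by
  rw [Measure.volume_eq_prod, setIntegral_prod_mul (fun x : ℝ ↦ (1 - x ^ 2)⁻¹)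
    (fun y : ℝ ↦ (1 - y ^ 2)⁻¹), setIntegral_inv_one_sub_sq_Ioo_neg hγ, sq]

lemma setIntegral_inv_one_sub_snd_sq {γ : ℝ} (hγ : γ ∈ Ico 0 1) :
    ∫ q : ℝ × ℝ in Ioo (-γ) γ ×ˢ Ioo (-γ) γ, (1 - q.2 ^ 2)⁻¹ = 2 * γ * (2 * artanh γ) := by
  have hlength : ∫ _ in Ioo (-γ) γ, (1 : ℝ) = 2 * γ := by
    rw [setIntegral_const, smul_eq_mul, mul_one, volume_real_Ioo_of_le (by linarith [hγ.1])]
    ring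
  have hprod := setIntegral_prod_mul (μ := volume) (ν := volume) (fun _ : ℝ ↦ (1 : ℝ))
    (fun y : ℝ ↦ (1 - y ^ 2)⁻¹) (Ioo (-γ) γ) (Ioo (-γ) γ)
  rw [hlength, setIntegral_inv_one_sub_sq_Ioo_neg hγ] at hprod
  simpa only [one_mul, ← Measure.volume_eq_prod] using hprod

lemma abs_squareDualArea_sub_le {γ : ℝ} (hγ : γ ∈ Ico 0 1) :
    |squareDualArea γ - 3 / 2 * (2 * artanh γ) ^ 2| ≤ 2 * γ * artanh γ := by
  have hfst : ContinuousOn (fun q : ℝ × ℝ ↦ (1 - q.1 ^ 2)⁻¹) (Ioo (-1) 1 ×ˢ Ioo (-1) 1) :=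
    continuousOn_inv_one_sub_sq.comp continuousOn_fst fun _ hq ↦ hq.1
  have hsnd : ContinuousOn (fun q : ℝ × ℝ ↦ (1 - q.2 ^ 2)⁻¹) (Ioo (-1) 1 ×ˢ Ioo (-1) 1) :=
    continuousOn_inv_one_sub_sq.comp continuousOn_snd fun _ hq ↦ hq.2
  have hIcc : Icc (-γ) γ ⊆ Ioo (-1) 1 := Icc_subset_Ioo (neg_lt_neg hγ.2) hγ.2
  have hsub : Icc (-γ) γ ×ˢ Icc (-γ) γ ⊆ Ioo (-1) 1 ×ˢ Ioo (-1) 1 := prod_mono hIcc hIcc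
  have harea := integrableOn_Ioo_prod_Ioo_of_continuousOn (continuousOn_dualBallArea.mono hsub)
  have hmain := integrableOn_Ioo_prod_Ioo_of_continuousOn ((hfst.fun_mul hsnd).mono hsub)
  have herror := integrableOn_Ioo_prod_Ioo_of_continuousOn (hsnd.mono hsub)
  calc |squareDualArea γ - 3 / 2 * (2 * artanh γ) ^ 2|
    _ = |∫ q in Ioo (-γ) γ ×ˢ Ioo (-γ) γ,
          (dualBallArea q - 3 / 2 * ((1 - q.1 ^ 2)⁻¹ * (1 - q.2 ^ 2)⁻¹))| := by
      rw [integral_sub harea (hmain.const_mul _), integral_const_mul,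
        setIntegral_inv_mul_inv_one_sub_sq hγ, squareDualArea]
    _ ≤ ∫ q : ℝ × ℝ in Ioo (-γ) γ ×ˢ Ioo (-γ) γ, 1 / 2 * (1 - q.2 ^ 2)⁻¹ := by
      rw [← norm_eq_abs]
      refine norm_integral_le_of_norm_le (herror.const_mul _) ?_
      filter_upwards [ae_restrict_mem (measurableSet_Ioo.prod measurableSet_Ioo)] with q hq
      exact abs_dualBallArea_sub_le ((abs_lt.2 hq.1).trans hγ.2) ((abs_lt.2 hq.2).trans hγ.2)
    _ = 2 * γ * artanh γ := by
      rw [integral_const_mul, setIntegral_inv_one_sub_snd_sq hγ]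
      ring

lemma squareDualArea_isEquivalent_artanh_sq :
    squareDualArea ~[𝓝[<] 1] fun γ ↦ 3 / 2 * (2 * artanh γ) ^ 2 := by
  have herror : (fun γ ↦ squareDualArea γ - 3 / 2 * (2 * artanh γ) ^ 2) =O[𝓝[<] 1] artanh := by
    refine IsBigO.of_bound 2 ?_
    filter_upwards [Ico_mem_nhdsLT zero_lt_one] with γ hγ
    have hartanh : 0 ≤ artanh γ := artanh_nonneg hγ.1
    rw [norm_eq_abs, norm_of_nonneg hartanh]
    refine (abs_squareDualArea_sub_le hγ).trans ?_
    gcongr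
    linarith [hγ.2]
  have hsq : artanh =o[𝓝[<] 1] fun γ ↦ artanh γ ^ 2 := by
    simpa only [pow_one, Function.comp_def] using
      (isLittleO_pow_pow_atTop_of_lt (𝕜 := ℝ) one_lt_two).comp_tendsto tendsto_artanh_atTop
  refine (herror.trans_isLittleO hsq).trans_isBigO ?_
  simp only [mul_pow, ← mul_assoc]
  exact isBigO_self_const_mul (by norm_num) _ _

lemma squareDualArea_isEquivalent :
    squareDualArea ~[𝓝[<] 1] fun γ ↦ 3 / 2 * log (1 - γ) ^ 2 := by
  refine squareDualArea_isEquivalent_artanh_sq.trans ?_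
  have hsq := (IsEquivalent.refl (u := fun _ ↦ (6 : ℝ))).mul (isEquivalent_artanh.pow 2)
  convert! hsq using 1 <;> ext γ <;> simp only [Pi.mul_apply, Pi.pow_apply] <;> ring

end SquareDualArea

section InscribedSquare

/-- Half the side length `γ` of the square with axis-parallel sides inscribed in the quadrilateral
with vertices `(β, 1)`, `(-1, α)`, `(β, -1)`, `(1, α)`: the common coordinate of the point where the
diagonal meets the side from `(β, 1)` to `(1, α)`. -/
noncomputable def inscribedHalfSide (α β : ℝ) : ℝ :=
  (1 - α * β) / (2 - α - β)

lemma half_min_le_mul_div_add {a b : ℝ} (ha : 0 < a) (hb : 0 < b) :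
    min a b / 2 ≤ a * b / (a + b) := by
  rw [div_le_div_iff₀ two_pos (add_pos ha hb), ← min_mul_max a b, ← min_add_max a b, mul_assoc]
  gcongr
  linarith [min_le_max (a := a) (b := b)]

lemma mul_div_add_le_min {a b : ℝ} (ha : 0 < a) (hb : 0 < b) :
    a * b / (a + b) ≤ min a b := by
  rw [div_le_iff₀ (add_pos ha hb), ← min_mul_max a b]
  gcongr
  exact max_le_add_of_nonneg ha.le hb.le

lemma one_sub_inscribedHalfSide {α β : ℝ} (h : α + β ≠ 2) :
    1 - inscribedHalfSide α β = (1 - α) * (1 - β) / ((1 - α) + (1 - β)) := by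
  have hleft : 2 - α - β ≠ 0 := fun h' ↦ h (by linarith)
  have hright : (1 - α) + (1 - β) ≠ 0 := fun h' ↦ h (by linarith)
  rw [inscribedHalfSide]
  field_simp
  ring

lemma one_sub_inscribedHalfSide_mem_Icc {α β : ℝ} (hα : α < 1) (hβ : β < 1) :
    1 - inscribedHalfSide α β ∈ Icc ((1 - max α β) / 2) (1 - max α β) := by
  rw [one_sub_inscribedHalfSide (by linarith), ← min_sub_sub_left]
  exact ⟨half_min_le_mul_div_add (sub_pos.2 hα) (sub_pos.2 hβ),
    mul_div_add_le_min (sub_pos.2 hα) (sub_pos.2 hβ)⟩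

/-- The filter on pairs `(α, β)` along which `max α β` tends to `1` from below. -/
def maxNhdsLTOne : Filter (ℝ × ℝ) :=
  comap (fun p ↦ max p.1 p.2) (𝓝[<] 1)

lemma tendsto_max_maxNhdsLTOne :
    Tendsto (fun p : ℝ × ℝ ↦ max p.1 p.2) maxNhdsLTOne (𝓝[<] 1) :=
  tendsto_comap

lemma eventually_one_sub_inscribedHalfSide_mem_Icc :
    ∀ᶠ p in maxNhdsLTOne, 0 < 1 - max p.1 p.2 ∧
      1 - inscribedHalfSide p.1 p.2 ∈ Icc ((1 - max p.1 p.2) / 2) (1 - max p.1 p.2) := by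
  filter_upwards [tendsto_max_maxNhdsLTOne self_mem_nhdsWithin] with p (hp : max p.1 p.2 < 1)
  obtain ⟨hα, hβ⟩ := max_lt_iff.1 hp
  exact ⟨sub_pos.2 hp, one_sub_inscribedHalfSide_mem_Icc hα hβ⟩

lemma tendsto_inscribedHalfSide :
    Tendsto (fun p : ℝ × ℝ ↦ inscribedHalfSide p.1 p.2) maxNhdsLTOne (𝓝[<] 1) := by
  obtain ⟨hmax, -⟩ := tendsto_nhdsWithin_iff.1 tendsto_max_maxNhdsLTOne
  refine tendsto_nhdsWithin_iff.2 ⟨tendsto_of_tendsto_of_tendsto_of_le_of_le' hmax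
    tendsto_const_nhds ?_ ?_, ?_⟩ <;>
  filter_upwards [eventually_one_sub_inscribedHalfSide_mem_Icc] with p ⟨hpos, hlower, hupper⟩
  · linarith
  · linarith
  · exact mem_Iio.2 (by linarith)

lemma isEquivalent_log_one_sub_inscribedHalfSide :
    (fun p : ℝ × ℝ ↦ log (1 - inscribedHalfSide p.1 p.2)) ~[maxNhdsLTOne]
      fun p ↦ log (1 - max p.1 p.2) := by
  refine isEquivalent_log_of_isTheta ⟨IsBigO.of_bound 1 ?_, IsBigO.of_bound 2 ?_⟩
    (tendsto_abs_log_one_sub.comp tendsto_max_maxNhdsLTOne) <;>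
  filter_upwards [eventually_one_sub_inscribedHalfSide_mem_Icc] with p ⟨hpos, hlower, hupper⟩ <;>
  rw [norm_of_nonneg hpos.le, norm_of_nonneg (by linarith)] <;>
  linarith

end InscribedSquare

lemma nhdsLT_hasBasis_Ioo_sub (a : ℝ) {r : ℝ} (hr : 0 < r) :
    (𝓝[<] a).HasBasis (· ∈ Ioo 0 r) fun δ ↦ Ioo (a - δ) a := by
  refine (nhdsLT_basis a).to_hasBasis (fun b hb ↦ ?_) fun δ hδ ↦
    ⟨a - δ, sub_lt_self a hδ.1, Subset.rfl⟩
  obtain ⟨δ, hδ, hlt⟩ := exists_between (lt_min (sub_pos.2 hb) hr)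
  obtain ⟨hδb, hδr⟩ := lt_min_iff.1 hlt
  exact ⟨δ, ⟨hδ, hδr⟩, Ioo_subset_Ioo_left (by linarith)⟩

theorem stmt14_general :
    Tendsto (fun p : ℝ × ℝ ↦
        squareDualArea (inscribedHalfSide p.1 p.2) / log (1 - max p.1 p.2) ^ 2)
      maxNhdsLTOne (𝓝 (3 / 2)) := by
  have harea : (fun p : ℝ × ℝ ↦ squareDualArea (inscribedHalfSide p.1 p.2)) ~[maxNhdsLTOne]
      fun p ↦ 3 / 2 * log (1 - max p.1 p.2) ^ 2 :=
    (squareDualArea_isEquivalent.comp_tendsto tendsto_inscribedHalfSide).trans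
      (IsEquivalent.refl.mul (isEquivalent_log_one_sub_inscribedHalfSide.pow 2))
  have hlog : ∀ᶠ p : ℝ × ℝ in maxNhdsLTOne, |log (1 - max p.1 p.2)| ≠ 0 :=
    (tendsto_abs_log_one_sub.comp tendsto_max_maxNhdsLTOne).eventually_ne_atTop 0
  refine (harea.div (IsEquivalent.refl (u := fun p : ℝ × ℝ ↦ log (1 - max p.1 p.2) ^ 2))).symm
    |>.tendsto_nhds (tendsto_const_nhds.congr' ?_)
  filter_upwards [hlog] with p hp
  exact (mul_div_cancel_right₀ _ (pow_ne_zero 2 (abs_ne_zero.1 hp))).symm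

theorem stmt14 :
    ∀ ε > (0 : ℝ), ∃ δ ∈ Set.Ioo (0 : ℝ) 1,
      ∀ α β : ℝ, α ∈ Set.Ico (0 : ℝ) 1 → β ∈ Set.Ico (0 : ℝ) 1 → 1 - δ < max α β →
        |(∫ q in Set.Ioo (-((1 - α * β) / (2 - α - β))) ((1 - α * β) / (2 - α - β)) ×ˢ
              Set.Ioo (-((1 - α * β) / (2 - α - β))) ((1 - α * β) / (2 - α - β)),
            dualBallArea q) / (Real.log (1 - max α β)) ^ 2 - 3 / 2| < ε := by
  intro ε hε
  obtain ⟨δ, hδ, hclose⟩ := (((nhdsLT_hasBasis_Ioo_sub 1 one_pos).comap _).tendsto_iff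
    Metric.nhds_basis_ball).1 stmt14_general ε hε
  exact ⟨δ, hδ, fun α β hα hβ hmax ↦ hclose (α, β) ⟨hmax, max_lt hα.2 hβ.2⟩⟩
end

section
/- Let α, β ∈ [0,1) and set γ = (1−αβ)/(2−α−β). Let D' = {(x,y) ∈ ℝ² : γ < y < 1 and β − ((1+β)/(1−α))·(1−y) < x < β} (the open triangle cut out by the lines y = γ, x = β, and the line through (β,1) and (−1,α)). Then ∫_{D'} (2+y)/((1−x²)(1−y²)) d(x,y) ≤ (2/(1−β))·(log(2−α−β) − log(1−α)). -/
/-!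
On the triangle, `y ≥ 0` gives `(2 + y) / (1 - y²) ≤ 2 / (1 - y)`. On the horizontal slice at height
`y`, bounded by `x = l y` on the left and `x = β` on the right, `1 - x² ≥ (1 - β) (1 + l y)`. Hence
the integrand is bounded by a function of `y` alone, which Fubini's theorem weights by the width
`β - l y` of the slice. Since `β - l y` is a multiple of `1 - y` and `1 + l y` is a multiple of
`y - α`, the zero of `1 - y` cancels and what remains is `2 / ((1 - β) (y - α))`, whose integral is
a logarithm.
-/

open MeasureTheory Real

section RegionBetween

variable {ι E : Type*} [MeasurableSpace ι] [NormedAddCommGroup E] [NormedSpace ℝ E]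
  {μ : Measure ι} {f g : ι → ℝ} {s : Set ι} {h : ι → E}

theorem toReal_ofReal_sub_smul_ae_eq (hs : MeasurableSet s) (hfg : ∀ i ∈ s, f i ≤ g i) :
    (fun i ↦ (ENNReal.ofReal (g i - f i)).toReal • h i) =ᵐ[μ.restrict s]
      fun i ↦ (g i - f i) • h i :=
  ae_restrict_of_forall_mem hs fun i hi ↦
    congrArg (· • h i) (ENNReal.toReal_ofReal (sub_nonneg.2 (hfg i hi)))

variable [SFinite μ]

theorem map_fst_restrict_regionBetween (hf : Measurable f) (hg : Measurable g)
    (hs : MeasurableSet s) :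
    ((μ.prod volume).restrict (regionBetween f g s)).map Prod.fst =
      (μ.restrict s).withDensity fun i ↦ ENNReal.ofReal (g i - f i) := by
  ext t ht
  have fst_preimage_inter :
      Prod.fst ⁻¹' t ∩ regionBetween f g s = regionBetween f g (t ∩ s) := by
    ext p
    simp only [regionBetween, Set.mem_inter_iff, Set.mem_preimage, Set.mem_ofPred_eq, and_assoc]
  rw [Measure.map_apply measurable_fst ht, Measure.restrict_apply (measurable_fst ht),
    fst_preimage_inter, volume_regionBetween_eq_lintegral hf.aemeasurable hg.aemeasurable
      (ht.inter hs), withDensity_apply _ ht, Measure.restrict_restrict ht]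
  rfl

theorem integrable_map_fst_restrict_regionBetween (hf : Measurable f) (hg : Measurable g)
    (hs : MeasurableSet s) (hfg : ∀ i ∈ s, f i ≤ g i)
    (hh : IntegrableOn (fun i ↦ (g i - f i) • h i) s μ) :
    Integrable h (((μ.prod volume).restrict (regionBetween f g s)).map Prod.fst) := by
  rw [map_fst_restrict_regionBetween hf hg hs, integrable_withDensity_iff_integrable_smul'
    (by fun_prop) (.of_forall fun _ ↦ ENNReal.ofReal_lt_top)]
  exact hh.congr (toReal_ofReal_sub_smul_ae_eq hs hfg).symm

theorem setIntegral_regionBetween_comp_fst (hf : Measurable f) (hg : Measurable g)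
    (hs : MeasurableSet s) (hfg : ∀ i ∈ s, f i ≤ g i)
    (hh : IntegrableOn (fun i ↦ (g i - f i) • h i) s μ) :
    ∫ p in regionBetween f g s, h p.1 ∂μ.prod volume = ∫ i in s, (g i - f i) • h i ∂μ := by
  have hh' := integrable_map_fst_restrict_regionBetween hf hg hs hfg hh
  rw [← integral_map measurable_fst.aemeasurable hh'.aestronglyMeasurable,
    map_fst_restrict_regionBetween hf hg hs, integral_withDensity_eq_integral_toReal_smul
      (by fun_prop) (.of_forall fun _ ↦ ENNReal.ofReal_lt_top)]
  exact integral_congr_ae (toReal_ofReal_sub_smul_ae_eq hs hfg)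

theorem setIntegral_regionBetween_le_of_le_comp_fst {F : ι × ℝ → ℝ} {h : ι → ℝ}
    (hf : Measurable f) (hg : Measurable g) (hs : MeasurableSet s) (hfg : ∀ i ∈ s, f i ≤ g i)
    (hF : ∀ p ∈ regionBetween f g s, 0 ≤ F p) (hFh : ∀ p ∈ regionBetween f g s, F p ≤ h p.1)
    (hh : IntegrableOn (fun i ↦ (g i - f i) * h i) s μ) :
    ∫ p in regionBetween f g s, F p ∂μ.prod volume ≤ ∫ i in s, (g i - f i) * h i ∂μ :=
  calc ∫ p in regionBetween f g s, F p ∂μ.prod volume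
    _ ≤ ∫ p in regionBetween f g s, h p.1 ∂μ.prod volume :=
      setIntegral_mono_of_nonneg hF hFh <|
        (integrable_map_fst_restrict_regionBetween hf hg hs hfg hh).comp_measurable measurable_fst
    _ = ∫ i in s, (g i - f i) * h i ∂μ := setIntegral_regionBetween_comp_fst hf hg hs hfg hh

end RegionBetween

section InvSub

variable {a c d : ℝ}

theorem integrableOn_Ioo_inv_sub (hac : a < c) :
    IntegrableOn (fun y ↦ (y - a)⁻¹) (Set.Ioo c d) := by
  have hcont : ContinuousOn (fun y ↦ (y - a)⁻¹) (Set.Icc c d) :=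
    (continuousOn_id.sub continuousOn_const).inv₀ fun y hy ↦ (sub_pos.2 (hac.trans_le hy.1)).ne'
  exact hcont.integrableOn_Icc.mono_set Set.Ioo_subset_Icc_self

theorem setIntegral_Ioo_inv_sub (hac : a < c) (hcd : c ≤ d) :
    ∫ y in Set.Ioo c d, (y - a)⁻¹ = log ((d - a) / (c - a)) := by
  rw [← integral_Ioc_eq_integral_Ioo, ← intervalIntegral.integral_of_le hcd,
    intervalIntegral.integral_comp_sub_right (fun y ↦ y⁻¹),
    integral_inv_of_pos (sub_pos.2 hac) (sub_pos.2 (hac.trans_le hcd))]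

end InvSub

section Integrand

variable {a b x y : ℝ}

theorem one_add_mul_one_sub_le_one_sub_sq (ha : -1 ≤ a) (hax : a ≤ x) (hxb : x ≤ b) (hb : b ≤ 1) :
    (1 + a) * (1 - b) ≤ 1 - x ^ 2 :=
  calc (1 + a) * (1 - b)
    _ ≤ (1 + x) * (1 - x) := by gcongr; linarith
    _ = 1 - x ^ 2 := by ring

theorem two_add_div_one_sub_sq_le (hy₀ : 0 ≤ y) (hy₁ : y < 1) :
    (2 + y) / (1 - y ^ 2) ≤ 2 / (1 - y) := by
  have hy : 0 < 1 - y := sub_pos.2 hy₁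
  have hfactor : 1 - y ^ 2 = (1 - y) * (1 + y) := by ring
  rw [hfactor, ← div_div, div_right_comm]
  refine div_le_div_of_nonneg_right ?_ hy.le
  rw [div_le_iff₀ (by positivity)]
  linarith

theorem two_add_div_one_sub_sq_mul_one_sub_sq_nonneg (hx : |x| ≤ 1) (hy : |y| ≤ 1) :
    0 ≤ (2 + y) / ((1 - x ^ 2) * (1 - y ^ 2)) := by
  have hx' : 0 ≤ 1 - x ^ 2 := sub_nonneg.2 ((sq_le_one_iff_abs_le_one x).2 hx)
  have hy' : 0 ≤ 1 - y ^ 2 := sub_nonneg.2 ((sq_le_one_iff_abs_le_one y).2 hy)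
  have : 0 ≤ 2 + y := by linarith [neg_le_of_abs_le hy]
  positivity

theorem two_add_div_one_sub_sq_mul_one_sub_sq_le (ha : -1 < a) (hax : a ≤ x) (hxb : x ≤ b)
    (hb : b < 1) (hy₀ : 0 ≤ y) (hy₁ : y < 1) :
    (2 + y) / ((1 - x ^ 2) * (1 - y ^ 2)) ≤ 2 / ((1 + a) * (1 - b) * (1 - y)) := by
  have hab : 0 < (1 + a) * (1 - b) := mul_pos (by linarith) (by linarith)
  have : 0 < 1 - y := sub_pos.2 hy₁
  calc (2 + y) / ((1 - x ^ 2) * (1 - y ^ 2))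
    _ = (2 + y) / (1 - y ^ 2) / (1 - x ^ 2) := by rw [div_div, mul_comm]
    _ ≤ 2 / (1 - y) / ((1 + a) * (1 - b)) := by
      gcongr ?_ / ?_
      · exact two_add_div_one_sub_sq_le hy₀ hy₁
      · exact one_add_mul_one_sub_le_one_sub_sq ha.le hax hxb hb.le
    _ = 2 / ((1 + a) * (1 - b) * (1 - y)) := by rw [div_div, mul_comm]

end Integrand

section LeftEdge

variable {α β c y : ℝ}

/-- The abscissa at height `y` of the line through `(β, 1)` and `(-1, α)`, which carries the left
edge of the triangle. -/
noncomputable def leftEdge (α β y : ℝ) : ℝ := β - (1 + β) / (1 - α) * (1 - y)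

theorem measurable_leftEdge (α β : ℝ) : Measurable (leftEdge α β) := by
  unfold leftEdge
  fun_prop

theorem one_add_leftEdge (hα : α ≠ 1) (β y : ℝ) :
    1 + leftEdge α β y = (1 + β) / (1 - α) * (y - α) := by
  have hα' : 1 - α ≠ 0 := sub_ne_zero.2 hα.symm
  rw [leftEdge]
  field_simp
  ring

theorem neg_one_lt_leftEdge (hα : α < 1) (hβ : -1 < β) (hy : α < y) : -1 < leftEdge α β y := by
  have : 0 < 1 + leftEdge α β y := by
    rw [one_add_leftEdge hα.ne]
    exact mul_pos (div_pos (by linarith) (sub_pos.2 hα)) (sub_pos.2 hy)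
  linarith

theorem leftEdge_le (hα : α < 1) (hβ : -1 < β) (hy : y ≤ 1) : leftEdge α β y ≤ β :=
  sub_le_self _ (mul_nonneg (div_nonneg (by linarith) (by linarith)) (by linarith))

theorem sub_leftEdge_mul_two_div (hα : α ≠ 1) (hβ : β ≠ -1) (hy : y ≠ 1) :
    (β - leftEdge α β y) * (2 / ((1 + leftEdge α β y) * (1 - β) * (1 - y))) =
      2 / (1 - β) * (y - α)⁻¹ := by
  have hα' : 1 - α ≠ 0 := sub_ne_zero.2 hα.symm
  have hβ' : 1 + β ≠ 0 := fun h ↦ hβ (eq_neg_of_add_eq_zero_right h)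
  have hy' : 1 - y ≠ 0 := sub_ne_zero.2 hy.symm
  have hwidth : β - leftEdge α β y = (1 + β) / (1 - α) * (1 - y) := sub_sub_cancel _ _
  rw [hwidth, one_add_leftEdge hα]
  field_simp

theorem setIntegral_regionBetween_leftEdge_le (hβ : β ∈ Set.Ioo (-1) 1) (hc : 0 ≤ c) (hαc : α < c)
    (hc₁ : c ≤ 1) :
    ∫ p in regionBetween (leftEdge α β) (fun _ ↦ β) (Set.Ioo c 1),
        (2 + p.1) / ((1 - p.2 ^ 2) * (1 - p.1 ^ 2)) ≤
      2 / (1 - β) * log ((1 - α) / (c - α)) := by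
  have hα : α < 1 := hαc.trans_le hc₁
  have hweight : Set.EqOn
      (fun y ↦ (β - leftEdge α β y) * (2 / ((1 + leftEdge α β y) * (1 - β) * (1 - y))))
      (fun y ↦ 2 / (1 - β) * (y - α)⁻¹) (Set.Ioo c 1) := fun y hy ↦
    sub_leftEdge_mul_two_div hα.ne hβ.1.ne' hy.2.ne
  calc _
    _ ≤ ∫ y in Set.Ioo c 1,
        (β - leftEdge α β y) * (2 / ((1 + leftEdge α β y) * (1 - β) * (1 - y))) := by
      refine setIntegral_regionBetween_le_of_le_comp_fst (measurable_leftEdge α β) measurable_const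
        measurableSet_Ioo (fun y hy ↦ leftEdge_le hα hβ.1 hy.2.le) ?_ ?_
        (IntegrableOn.congr_fun ((integrableOn_Ioo_inv_sub hαc).const_mul _) hweight.symm
          measurableSet_Ioo)
      all_goals
        rintro ⟨y, x⟩ ⟨⟨hcy, hy₁⟩, hlx, hxβ⟩
        have hl : -1 < leftEdge α β y := neg_one_lt_leftEdge hα hβ.1 (hαc.trans hcy)
      · exact two_add_div_one_sub_sq_mul_one_sub_sq_nonneg
          (abs_le.2 ⟨(hl.trans hlx).le, (hxβ.trans hβ.2).le⟩) (abs_le.2 ⟨by linarith, hy₁.le⟩)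
      · exact two_add_div_one_sub_sq_mul_one_sub_sq_le hl hlx.le hxβ.le hβ.2 (hc.trans hcy.le) hy₁
    _ = 2 / (1 - β) * log ((1 - α) / (c - α)) := by
      rw [setIntegral_congr_fun measurableSet_Ioo hweight, integral_const_mul,
        setIntegral_Ioo_inv_sub hαc hc₁]

end LeftEdge

section CutHeight

variable {α β : ℝ}

/-- The height `γ` of the lower edge of the triangle. -/
noncomputable def cutHeight (α β : ℝ) : ℝ := (1 - α * β) / (2 - α - β)

theorem cutHeight_sub_left (h : α + β ≠ 2) :
    cutHeight α β - α = (1 - α) ^ 2 / (2 - α - β) := by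
  have : 2 - α - β ≠ 0 := fun h' ↦ h (by linarith)
  rw [cutHeight]
  field_simp
  ring

theorem one_sub_cutHeight (h : α + β ≠ 2) :
    1 - cutHeight α β = (1 - α) * (1 - β) / (2 - α - β) := by
  have : 2 - α - β ≠ 0 := fun h' ↦ h (by linarith)
  rw [cutHeight]
  field_simp
  ring

theorem cutHeight_nonneg (hαβ : α * β ≤ 1) (h : α + β ≤ 2) : 0 ≤ cutHeight α β :=
  div_nonneg (by linarith) (by linarith)

theorem left_lt_cutHeight (hα : α ≠ 1) (h : α + β < 2) : α < cutHeight α β := by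
  rw [← sub_pos, cutHeight_sub_left h.ne]
  exact div_pos (sq_pos_of_ne_zero (sub_ne_zero.2 hα.symm)) (by linarith)

theorem cutHeight_le_one (hα : α < 1) (hβ : β < 1) : cutHeight α β ≤ 1 := by
  rw [← sub_nonneg, one_sub_cutHeight (by linarith)]
  exact div_nonneg (mul_nonneg (by linarith) (by linarith)) (by linarith)

theorem one_sub_div_cutHeight_sub_left (hα : α ≠ 1) (h : α + β ≠ 2) :
    (1 - α) / (cutHeight α β - α) = (2 - α - β) / (1 - α) := by
  have : 1 - α ≠ 0 := sub_ne_zero.2 hα.symm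
  rw [cutHeight_sub_left h]
  field_simp

end CutHeight

theorem stmt17_general (α β : ℝ) (hα : α < 1) (hβ : β ∈ Set.Ioo (-1 : ℝ) 1) (hαβ : α * β ≤ 1) :
    (∫ q in {q : ℝ × ℝ | (1 - α * β) / (2 - α - β) < q.2 ∧ q.2 < 1 ∧
        β - ((1 + β) / (1 - α)) * (1 - q.2) < q.1 ∧ q.1 < β},
      (2 + q.2) / ((1 - q.1 ^ 2) * (1 - q.2 ^ 2))) ≤
    (2 / (1 - β)) * (Real.log (2 - α - β) - Real.log (1 - α)) := by
  have hsum : α + β < 2 := by linarith [hβ.2]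
  have hregion : {q : ℝ × ℝ | (1 - α * β) / (2 - α - β) < q.2 ∧ q.2 < 1 ∧
      β - ((1 + β) / (1 - α)) * (1 - q.2) < q.1 ∧ q.1 < β} =
      Prod.swap ⁻¹' regionBetween (leftEdge α β) (fun _ ↦ β) (Set.Ioo (cutHeight α β) 1) :=
    Set.ext fun _ ↦ and_assoc.symm
  rw [hregion, ← log_div (by linarith) (by linarith),
    ← one_sub_div_cutHeight_sub_left hα.ne hsum.ne]
  exact (Measure.measurePreserving_swap.setIntegral_preimage_emb
    MeasurableEquiv.prodComm.measurableEmbedding _ _).trans_le <|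
      setIntegral_regionBetween_leftEdge_le hβ (cutHeight_nonneg hαβ hsum.le)
        (left_lt_cutHeight hα.ne hsum) (cutHeight_le_one hα hβ.2)

theorem stmt17 (α β : ℝ) (hα : α ∈ Set.Ico (0 : ℝ) 1) (hβ : β ∈ Set.Ico (0 : ℝ) 1) :
    (∫ q in {q : ℝ × ℝ | (1 - α * β) / (2 - α - β) < q.2 ∧ q.2 < 1 ∧
        β - ((1 + β) / (1 - α)) * (1 - q.2) < q.1 ∧ q.1 < β},
      (2 + q.2) / ((1 - q.1 ^ 2) * (1 - q.2 ^ 2))) ≤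
    (2 / (1 - β)) * (Real.log (2 - α - β) - Real.log (1 - α)) :=
  stmt17_general α β hα.2 ⟨neg_one_lt_zero.trans_le hβ.1, hβ.2⟩
    (mul_le_one₀ hα.2.le hβ.1 hβ.2.le)
end
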